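/- For every n ∈ ℕ, m ∈ {0,…,n−1}, s > m and 0 < α ≤ 1 there exists a constant c = c(n,m,s,α) > 0 such that for every finite Borel regular measure μ on ℝⁿ with lower Hausdorff dimension dim_H(μ) ≥ s, for μ-almost every x ∈ ℝⁿ one has limsup_{r↓0} inf_{θ ∈ S^{n-1}, V ∈ G(n,n−m)} μ(X(x,r,V,α) \ H(x,θ,α)) / μ(B(x,r)) > c. -/

import Mathlib

open MeasureTheory Metric Filter Set
open scoped RealInnerProductSpace ENNReal

/-- The almost half-space `H(x,θ,α) = {y : (y-x)·θ > α|y-x|}`. -/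
def almostHalfSpace {n : ℕ} (x θ : EuclideanSpace ℝ (Fin n)) (α : ℝ) :
    Set (EuclideanSpace ℝ (Fin n)) :=
  {y | α * ‖y - x‖ < ⟪y - x, θ⟫}

/-- The two-sided cone `X(x,V,α) = {y : dist(y-x,V) < α|y-x|}`. -/
def coneX {n : ℕ} (x : EuclideanSpace ℝ (Fin n))
    (V : Submodule ℝ (EuclideanSpace ℝ (Fin n))) (α : ℝ) :
    Set (EuclideanSpace ℝ (Fin n)) :=
  {y | infDist (y - x) (V : Set (EuclideanSpace ℝ (Fin n))) < α * ‖y - x‖}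

/-- The (lower) Hausdorff dimension of a measure. -/
noncomputable def measDimH {n : ℕ} (μ : Measure (EuclideanSpace ℝ (Fin n))) : ℝ≥0∞ :=
  ⨅ (A : Set (EuclideanSpace ℝ (Fin n))) (_ : MeasurableSet A) (_ : 0 < μ A), dimH A

lemma exists_path {X C : Type*} [Fintype C] (F : Finset X) (col : X → X → C)
    (h : 2 ^ Fintype.card C < F.card) :
    ∃ x ∈ F, ∃ y ∈ F, ∃ z ∈ F, x ≠ y ∧ y ≠ z ∧ col x y = col y z := by
  classical
  by_contra! hcon
  let lt : X → X → Prop := WellOrderingRel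
  let S : X → Finset C := fun y =>
    Finset.univ.filter (fun c => ∃ x ∈ F, lt x y ∧ col x y = c)
  have hne : ∀ x y, lt x y → x ≠ y := by
    rintro x y hxy rfl
    exact irrefl_of (WellOrderingRel (α := X)) x hxy
  have key : ∀ x ∈ F, ∀ y ∈ F, lt x y → S x ≠ S y := by
    intro x hx y hy hxy heq
    have h1 : col x y ∈ S y := by
      simp only [S, Finset.mem_filter, Finset.mem_univ, true_and]
      exact ⟨x, hx, hxy, rfl⟩
    rw [← heq] at h1
    simp only [S, Finset.mem_filter, Finset.mem_univ, true_and] at h1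
    obtain ⟨w, hw, hwx, hcol⟩ := h1
    exact hcon w hw x hx y hy (hne _ _ hwx) (hne _ _ hxy) hcol
  have hinj : Set.InjOn S F := by
    intro x hx y hy hxy
    rcases trichotomous_of (WellOrderingRel (α := X)) x y with h1 | h1 | h1
    · exact absurd hxy (key x hx y hy h1)
    · exact h1
    · exact absurd hxy.symm (key y hy x hx h1)
  have := Finset.card_le_card_of_injOn S (t := Finset.univ) (by simp) hinj
  rw [Finset.card_univ, Fintype.card_finset] at this
  omega

lemma exists_frame {n m : ℕ} (hm : m < n) (V : Submodule ℝ (EuclideanSpace ℝ (Fin n)))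
    (hV : Module.finrank ℝ V = n - m) :
    ∃ e : Fin m → EuclideanSpace ℝ (Fin n), (∀ i, ‖e i‖ ≤ 1) ∧
      ∀ v, infDist v (V : Set (EuclideanSpace ℝ (Fin n))) ≤ ∑ i, |⟪e i, v⟫| := by
  have h1 := Submodule.finrank_add_finrank_orthogonal V
  have h2 : Module.finrank ℝ Vᗮ = m := by
    simp only [finrank_euclideanSpace, Fintype.card_fin] at h1
    omega
  let b := (stdOrthonormalBasis ℝ Vᗮ).reindex (finCongr h2)
  refine ⟨fun i => (b i : EuclideanSpace ℝ (Fin n)), fun i => ?_, fun v => ?_⟩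
  · exact (b.orthonormal.1 i).le
  · have hw : v - ∑ i, ⟪(b i : EuclideanSpace ℝ (Fin n)), v⟫ • (b i : EuclideanSpace ℝ (Fin n)) ∈ V := by
      refine (Submodule.orthogonal_orthogonal V).le ?_
      rw [Submodule.mem_orthogonal]
      intro u hu
      have h3 : ∑ i, ⟪b i, (⟨u, hu⟩ : Vᗮ)⟫ • b i = ⟨u, hu⟩ := b.sum_repr' _
      have h4 : u = ∑ i, ⟪(b i : EuclideanSpace ℝ (Fin n)), u⟫ • (b i : EuclideanSpace ℝ (Fin n)) := by
        have := congrArg (Subtype.val) h3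
        simpa using this.symm
      rw [inner_sub_right, inner_sum]
      conv_lhs => enter [1]; rw [h4]
      rw [sum_inner, sub_eq_zero]
      refine Finset.sum_congr rfl fun i _ => ?_
      rw [inner_smul_left, inner_smul_right, real_inner_comm u]
      simp [mul_comm]
    refine (infDist_le_dist_of_mem hw).trans ?_
    rw [dist_eq_norm, sub_sub_cancel]
    refine (norm_sum_le _ _).trans (Finset.sum_le_sum fun i _ => ?_)
    rw [norm_smul, Real.norm_eq_abs]
    exact mul_le_of_le_one_right (abs_nonneg _) (b.orthonormal.1 i).le

lemma cone_mem {n m : ℕ} {α δ ρ : ℝ} (hδ0 : 0 < δ) (hδ1 : δ ≤ 1 / 4)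
    (hδ : 4 * (m + 1) * δ ≤ α) (hρ : 0 < ρ)
    (y z z' : EuclideanSpace ℝ (Fin n)) (V : Submodule ℝ (EuclideanSpace ℝ (Fin n)))
    (e f : Fin m → EuclideanSpace ℝ (Fin n)) (he1 : ∀ i, ‖e i‖ ≤ 1)
    (he : ∀ v, infDist v (V : Set (EuclideanSpace ℝ (Fin n))) ≤ ∑ i, |⟪e i, v⟫|)
    (hef : ∀ i, ‖e i - f i‖ ≤ δ) (hf : ∀ i, |⟪f i, z - y⟫| ≤ δ * ρ)
    (hz : ρ ≤ ‖z - y‖) (hz' : ‖z' - z‖ ≤ δ * ρ) : z' ∈ coneX y V α := by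
  have hm0 : (0 : ℝ) ≤ m := Nat.cast_nonneg m
  have hd : δ * ρ ≤ δ * ‖z - y‖ := by gcongr
  have hterm : ∀ i, |⟪e i, z' - y⟫| ≤ 3 * δ * ‖z - y‖ := by
    intro i
    have h1 : ⟪e i, z' - y⟫ = ⟪e i, z' - z⟫ + ⟪e i - f i, z - y⟫ + ⟪f i, z - y⟫ := by
      have h0 : z' - y = (z' - z) + (z - y) := by abel
      rw [h0, inner_add_right, inner_sub_left]
      ring
    have h2 : |⟪e i, z' - z⟫| ≤ δ * ρ := by
      refine (abs_real_inner_le_norm _ _).trans ?_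
      nlinarith [he1 i, norm_nonneg (z' - z), norm_nonneg (e i)]
    have h3 : |⟪e i - f i, z - y⟫| ≤ δ * ‖z - y‖ := by
      refine (abs_real_inner_le_norm _ _).trans ?_
      gcongr
      exact hef i
    rw [h1]
    have := abs_add_three ⟪e i, z' - z⟫ ⟪e i - f i, z - y⟫ ⟪f i, z - y⟫
    linarith [hf i]
  have hsum : infDist (z' - y) (V : Set (EuclideanSpace ℝ (Fin n))) ≤ m * (3 * δ * ‖z - y‖) := by
    refine (he _).trans ((Finset.sum_le_sum fun i _ => hterm i).trans ?_)
    simp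
  have hn : (1 - δ) * ‖z - y‖ ≤ ‖z' - y‖ := by
    have : ‖z - y‖ ≤ ‖z' - y‖ + ‖z' - z‖ := by
      have := norm_sub_le (z' - y) (z' - z)
      simpa using this
    linarith
  have hpos : 0 < ‖z - y‖ := lt_of_lt_of_le hρ hz
  have hα : 0 < α := by nlinarith
  show infDist (z' - y) (V : Set (EuclideanSpace ℝ (Fin n))) < α * ‖z' - y‖
  have h5 : (3 / 4) * ‖z - y‖ ≤ ‖z' - y‖ := le_trans (by gcongr; linarith) hn
  have h6 : α * ((3 / 4) * ‖z - y‖) ≤ α * ‖z' - y‖ := by gcongr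
  have h7 : 4 * (m + 1) * δ * ‖z - y‖ ≤ α * ‖z - y‖ := by gcongr
  have h8 : 0 < δ * ‖z - y‖ := by positivity
  nlinarith

lemma half_aux {n : ℕ} {α δ ρ : ℝ} (hδ0 : 0 < δ) (hα0 : 0 < α) (hα1 : α ≤ 1)
    (hρ : 0 < ρ) (y z z' θ : EuclideanSpace ℝ (Fin n)) (hθ : ‖θ‖ = 1)
    (hz : ρ ≤ ‖z - y‖) (hz' : ‖z' - z‖ ≤ δ * ρ) (h : z' ∈ almostHalfSpace y θ α) :
    α - 2 * δ < ⟪(‖z - y‖)⁻¹ • (z - y), θ⟫ := by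
  have hpos : 0 < ‖z - y‖ := lt_of_lt_of_le hρ hz
  have hd : δ * ρ ≤ δ * ‖z - y‖ := by gcongr
  have h0 : α * ‖z' - y‖ < ⟪z' - y, θ⟫ := h
  have h1 : ⟪z' - y, θ⟫ = ⟪z' - z, θ⟫ + ⟪z - y, θ⟫ := by
    rw [← inner_add_left, sub_add_sub_cancel]
  have h2 : ⟪z' - z, θ⟫ ≤ ‖z' - z‖ := by
    have := real_inner_le_norm (z' - z) θ
    rwa [hθ, mul_one] at this
  have h3 : ‖z - y‖ ≤ ‖z' - y‖ + ‖z' - z‖ := by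
    have := norm_sub_le (z' - y) (z' - z)
    simpa using this
  rw [inner_smul_left]
  simp only [conj_trivial]
  rw [← div_eq_inv_mul, lt_div_iff₀ hpos]
  have h4 : α * (‖z - y‖ - ‖z' - z‖) ≤ α * ‖z' - y‖ := by gcongr; linarith
  have h5 : α * ‖z' - z‖ ≤ ‖z' - z‖ := by nlinarith [norm_nonneg (z' - z)]
  nlinarith

lemma geom (n m : ℕ) (hm : m < n) (α : ℝ) (hα0 : 0 < α) (hα1 : α ≤ 1) :
    ∃ M δ : ℝ, 0 < M ∧ 0 < δ ∧ ∀ (N : ℕ), 1 ≤ N → ∀ ρ : ℝ, 0 < ρ →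
      ∀ (F : Finset (EuclideanSpace ℝ (Fin n))),
      (∀ y ∈ F, ∀ z ∈ F, y ≠ z → ρ ≤ ‖z - y‖) →
      (∀ y ∈ F, ∀ z ∈ F, ‖z - y‖ ≤ n * N * ρ) →
      ∀ (θ : EuclideanSpace ℝ (Fin n) → EuclideanSpace ℝ (Fin n))
        (V : EuclideanSpace ℝ (Fin n) → Submodule ℝ (EuclideanSpace ℝ (Fin n))),
      (∀ y ∈ F, ‖θ y‖ = 1) → (∀ y ∈ F, Module.finrank ℝ (V y) = n - m) →
      (∀ y ∈ F, ∀ z ∈ F, y ≠ z → ∃ z', ‖z' - z‖ ≤ δ * ρ ∧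
        ¬ (z' ∈ coneX y (V y) α ∧ z' ∉ almostHalfSpace y (θ y) α)) →
      (F.card : ℝ) ≤ M * (N : ℝ) ^ m := by
  classical
  obtain ⟨δ, hδ⟩ : ∃ δ, δ = α / (4 * (m + 1)) := ⟨_, rfl⟩
  have hm0 : (0 : ℝ) ≤ m := Nat.cast_nonneg m
  have hδ0 : 0 < δ := by rw [hδ]; positivity
  have hδα : 4 * (m + 1) * δ ≤ α := by rw [hδ]; field_simp; rfl
  have hδ1 : 4 * δ ≤ α := by nlinarith
  have hδ2 : δ ≤ 1 / 4 := by linarith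
  obtain ⟨T1, hT1s, hT1f, hT1⟩ := finite_cover_balls_of_compact
    (isCompact_closedBall (0 : EuclideanSpace ℝ (Fin n)) 1) (half_pos hδ0)
  obtain ⟨T2, hT2s, hT2f, hT2⟩ := finite_cover_balls_of_compact
    (isCompact_closedBall (0 : Fin m → EuclideanSpace ℝ (Fin n)) 1) hδ0
  have := hT1f.fintype
  refine ⟨2 ^ Fintype.card T1 * ((hT2f.toFinset.card + 1) * (2 * n / δ + 3) ^ m), δ,
    by positivity, hδ0, ?_⟩
  intro N hN ρ hρ F hsep hdiam θ V hθ hV hno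
  rcases F.eq_empty_or_nonempty with rfl | ⟨y0, hy0⟩
  · simp; positivity
  -- frames
  have hfr : ∀ y : EuclideanSpace ℝ (Fin n), ∃ (e f : Fin m → EuclideanSpace ℝ (Fin n)),
      y ∈ F → (∀ i, ‖e i‖ ≤ 1) ∧
      (∀ v, infDist v (V y : Set (EuclideanSpace ℝ (Fin n))) ≤ ∑ i, |⟪e i, v⟫|) ∧
      f ∈ T2 ∧ (∀ i, ‖e i - f i‖ ≤ δ) := by
    intro y
    by_cases hy : y ∈ F
    · obtain ⟨e, he1, he⟩ := exists_frame hm (V y) (hV y hy)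
      have : e ∈ closedBall (0 : Fin m → EuclideanSpace ℝ (Fin n)) 1 := by
        rw [mem_closedBall_zero_iff, pi_norm_le_iff_of_nonneg zero_le_one]
        exact he1
      have := hT2 this
      simp only [mem_iUnion, exists_prop] at this
      obtain ⟨f, hf, hef⟩ := this
      refine ⟨e, f, fun _ => ⟨he1, he, hf, fun i => ?_⟩⟩
      rw [mem_ball, dist_eq_norm] at hef
      exact (norm_le_pi_norm (e - f) i).trans hef.le
    · exact ⟨0, 0, fun h => absurd h hy⟩
  choose e f hef using hfr
  -- directions
  have hdir : ∀ x y : EuclideanSpace ℝ (Fin n), ∃ t : T1,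
      dist ((‖y - x‖)⁻¹ • (y - x)) (t : EuclideanSpace ℝ (Fin n)) < δ / 2 := by
    intro x y
    have : (‖y - x‖)⁻¹ • (y - x) ∈ closedBall (0 : EuclideanSpace ℝ (Fin n)) 1 := by
      rw [mem_closedBall_zero_iff, norm_smul, norm_inv, norm_norm]
      exact inv_mul_le_one
    have := hT1 this
    simp only [mem_iUnion, exists_prop] at this
    obtain ⟨t, ht, h⟩ := this
    exact ⟨⟨t, ht⟩, h⟩
  choose col hcol using hdir
  let B : ℤ := ⌈(n * N / δ : ℝ)⌉
  let code : EuclideanSpace ℝ (Fin n) →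
      (Fin m → EuclideanSpace ℝ (Fin n)) × (Fin m → ℤ) :=
    fun y => (f y, fun i => ⌊⟪f y i, y - y0⟫ / (δ * ρ)⌋)
  let T := hT2f.toFinset ×ˢ Fintype.piFinset (fun _ : Fin m => Finset.Icc (-B) B)
  have hmaps : ∀ y ∈ F, code y ∈ T := by
    intro y hy
    obtain ⟨h1, h2, h3, h4⟩ := hef y hy
    simp only [T, code, Finset.mem_product, Set.Finite.mem_toFinset, Fintype.mem_piFinset,
      Finset.mem_Icc]
    refine ⟨h3, fun i => ?_⟩
    have hf1 : ‖f y i‖ ≤ 1 := by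
      have := hT2s h3
      rw [mem_closedBall_zero_iff, pi_norm_le_iff_of_nonneg zero_le_one] at this
      exact this i
    have h5 : |⟪f y i, y - y0⟫| ≤ n * N * ρ := by
      refine (abs_real_inner_le_norm _ _).trans ?_
      have := hdiam y0 hy0 y hy
      nlinarith [norm_nonneg (y - y0), norm_nonneg (f y i)]
    have h6 : |⟪f y i, y - y0⟫ / (δ * ρ)| ≤ n * N / δ := by
      rw [abs_div, abs_of_pos (mul_pos hδ0 hρ), div_le_div_iff₀ (mul_pos hδ0 hρ) hδ0]
      nlinarith
    have h7 : (n * N / δ : ℝ) ≤ B := Int.le_ceil _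
    have h8 := abs_le.1 (h6.trans h7)
    constructor
    · rw [Int.le_floor]; push_cast; exact h8.1
    · have := Int.floor_le (⟪f y i, y - y0⟫ / (δ * ρ))
      exact_mod_cast this.trans h8.2
  have hfib : ∀ b ∈ T, (F.filter (fun a => code a = b)).card ≤ 2 ^ Fintype.card T1 := by
    intro b hb
    by_contra! hlt
    obtain ⟨x, hx, y, hy, z, hz, hxy, hyz, hc⟩ := exists_path _ col hlt
    simp only [Finset.mem_filter] at hx hy hz
    have hprep : ∀ w, w ∈ F ∧ code w = b → y ≠ w →
        α - 2 * δ < ⟪(‖w - y‖)⁻¹ • (w - y), θ y⟫ := by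
      intro w hw hyw
      obtain ⟨w', hw', hbad⟩ := hno y hy.1 w hw.1 hyw
      obtain ⟨h1, h2, h3, h4⟩ := hef y hy.1
      have hceq : code w = code y := hw.2.trans hy.2.symm
      have hfeq : f w = f y := congrArg Prod.fst hceq
      have hcone : w' ∈ coneX y (V y) α := by
        refine cone_mem hδ0 hδ2 hδα hρ y w w' (V y) (e y) (f y) h1 h2 h4 (fun i => ?_)
          (hsep y hy.1 w hw.1 hyw) hw'
        have h5 : ⌊⟪f w i, w - y0⟫ / (δ * ρ)⌋ = ⌊⟪f y i, y - y0⟫ / (δ * ρ)⌋ :=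
          congrFun (congrArg Prod.snd hceq) i
        have h6 := Int.abs_sub_lt_one_of_floor_eq_floor h5
        rw [hfeq, ← sub_div, ← inner_sub_right, sub_sub_sub_cancel_right, abs_div,
          abs_of_pos (mul_pos hδ0 hρ), div_lt_one (mul_pos hδ0 hρ)] at h6
        exact h6.le
      have hH : w' ∈ almostHalfSpace y (θ y) α := by
        by_contra hcon
        exact hbad ⟨hcone, hcon⟩
      exact half_aux hδ0 hα0 hα1 hρ y w w' (θ y) (hθ y hy.1) (hsep y hy.1 w hw.1 hyw) hw' hH
    have hA := hprep z hz hyz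
    have hB := hprep x hx hxy.symm
    have h1 := hcol x y
    have h2 := hcol y z
    rw [← hc] at h2
    have h3 : dist ((‖z - y‖)⁻¹ • (z - y)) ((‖y - x‖)⁻¹ • (y - x)) < δ := by
      have := dist_triangle_right ((‖z - y‖)⁻¹ • (z - y)) ((‖y - x‖)⁻¹ • (y - x)) (col x y : EuclideanSpace ℝ (Fin n))
      linarith
    rw [dist_eq_norm] at h3
    have h4 : (‖x - y‖)⁻¹ • (x - y) = - ((‖y - x‖)⁻¹ • (y - x)) := by
      rw [norm_sub_rev, ← smul_neg, neg_sub]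
    rw [h4, inner_neg_left] at hB
    have h5 := real_inner_le_norm ((‖z - y‖)⁻¹ • (z - y) - (‖y - x‖)⁻¹ • (y - x)) (θ y)
    rw [hθ y hy.1, mul_one, inner_sub_left] at h5
    linarith
  have hcard := Finset.card_le_mul_card_image_of_maps_to hmaps _ hfib
  have hTc : T.card = hT2f.toFinset.card * (2 * B + 1).toNat ^ m := by
    simp only [T, Finset.card_product, Fintype.card_piFinset, Int.card_Icc, Finset.prod_const,
      Finset.card_univ, Fintype.card_fin]
    congr 3
    ring
  have hN1 : (1 : ℝ) ≤ N := by exact_mod_cast hN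
  have hB0 : 0 ≤ B := Int.ceil_nonneg (by positivity)
  have hBr : (((2 * B + 1).toNat : ℕ) : ℝ) ≤ (2 * n / δ + 3) * N := by
    have h1 : (((2 * B + 1).toNat : ℕ) : ℝ) = 2 * (B : ℝ) + 1 := by
      have : (((2 * B + 1).toNat : ℕ) : ℤ) = 2 * B + 1 := Int.toNat_of_nonneg (by omega)
      exact_mod_cast this
    have h2 : (B : ℝ) < n * N / δ + 1 := Int.ceil_lt_add_one _
    have h3 : (2 * n / δ + 3) * N = 2 * (n * N / δ) + 3 * N := by ring
    rw [h1, h3]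
    linarith
  calc (F.card : ℝ) ≤ ((2 ^ Fintype.card T1 * T.card : ℕ) : ℝ) := by exact_mod_cast hcard
    _ = 2 ^ Fintype.card T1 * (hT2f.toFinset.card * (((2 * B + 1).toNat : ℕ) : ℝ) ^ m) := by
        rw [hTc]; push_cast; ring
    _ ≤ 2 ^ Fintype.card T1 * ((hT2f.toFinset.card + 1) * ((2 * n / δ + 3) * N) ^ m) := by
        gcongr
        linarith
    _ = _ := by rw [mul_pow]; ring

/-- Code of the level `k` grid cube (side `N^(-k)`) containing `x`. -/
noncomputable def gcode {n : ℕ} (N k : ℕ) (x : EuclideanSpace ℝ (Fin n)) : Fin n → ℤ :=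
  fun i => ⌊(N : ℝ) ^ k * x i⌋

/-- Code of the parent cube. -/
def par {n : ℕ} (N : ℕ) (p : Fin n → ℤ) : Fin n → ℤ := fun i => p i / (N : ℤ)

/-- Codes of the children of a cube. -/
noncomputable def children {n : ℕ} (N : ℕ) (q : Fin n → ℤ) : Finset (Fin n → ℤ) :=
  Fintype.piFinset (fun i => Finset.Ico ((N : ℤ) * q i) (N * q i + N))

lemma mem_children {n N : ℕ} (hN : 0 < N) (p q : Fin n → ℤ) :
    p ∈ children N q ↔ par N p = q := by
  have hN' : (0 : ℤ) < N := by exact_mod_cast hN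
  simp only [children, Fintype.mem_piFinset, Finset.mem_Ico, par, funext_iff]
  refine forall_congr' fun i => ?_
  rw [Int.ediv_eq_iff_of_pos hN']
  constructor <;> rintro ⟨h1, h2⟩ <;> constructor <;> nlinarith

lemma card_children {n N : ℕ} (q : Fin n → ℤ) : (children N q).card = N ^ n := by
  simp [children, Fintype.card_piFinset]

lemma par_gcode {n N : ℕ} (hN : 0 < N) (k : ℕ) (x : EuclideanSpace ℝ (Fin n)) :
    par N (gcode N (k + 1) x) = gcode N k x := by
  funext i
  simp only [par, gcode]
  rw [pow_succ', mul_assoc, Int.natCast_mul_floor_div_cancel hN.ne']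

lemma measurable_gcode {n : ℕ} (N k : ℕ) :
    Measurable (gcode N k : EuclideanSpace ℝ (Fin n) → Fin n → ℤ) := by
  refine measurable_pi_lambda _ fun i => ?_
  unfold gcode
  refine Int.measurable_floor.comp ?_
  fun_prop

lemma norm_le_of_coord {n : ℕ} (v : EuclideanSpace ℝ (Fin n)) (a : ℝ)
    (h : ∀ i, |v i| ≤ a) : ‖v‖ ≤ n * a := by
  rcases Nat.eq_zero_or_pos n with rfl | hn
  · have : v = 0 := Subsingleton.elim _ _
    simp [this]
  have ha : 0 ≤ a := (abs_nonneg _).trans (h ⟨0, hn⟩)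
  rw [EuclideanSpace.norm_eq]
  apply Real.sqrt_le_iff.2
  refine ⟨by positivity, ?_⟩
  have : ∑ i, ‖v i‖ ^ 2 ≤ ∑ _i : Fin n, a ^ 2 := by
    refine Finset.sum_le_sum fun i _ => ?_
    have := h i
    rw [Real.norm_eq_abs]
    gcongr
  refine this.trans ?_
  simp only [Finset.sum_const, Finset.card_univ, Fintype.card_fin, nsmul_eq_mul]
  have : (1 : ℝ) ≤ n := by exact_mod_cast hn
  nlinarith [sq_nonneg a, mul_nonneg (sq_nonneg a) (by linarith : (0 : ℝ) ≤ n - 1)]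

lemma coord_le_norm {n : ℕ} (v : EuclideanSpace ℝ (Fin n)) (i : Fin n) : |v i| ≤ ‖v‖ := by
  have := PiLp.norm_apply_le v i
  simpa using this

lemma norm_le_of_gcode_eq {n N k : ℕ} (hN : 0 < N) {x y : EuclideanSpace ℝ (Fin n)}
    (h : gcode N k x = gcode N k y) : ‖x - y‖ ≤ n * ((N : ℝ) ^ k)⁻¹ := by
  have hp : (0 : ℝ) < (N : ℝ) ^ k := by positivity
  refine norm_le_of_coord _ _ fun i => ?_
  have := Int.abs_sub_lt_one_of_floor_eq_floor (congrFun h i)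
  rw [← mul_sub, abs_mul, abs_of_pos hp] at this
  rw [PiLp.sub_apply, inv_eq_one_div, le_div_iff₀ hp]
  linarith

lemma gcode_near {n N k : ℕ} (hN : 0 < N) {x y : EuclideanSpace ℝ (Fin n)}
    (h : ‖x - y‖ ≤ n * ((N : ℝ) ^ k)⁻¹) (i : Fin n) :
    |gcode N k x i - gcode N k y i| ≤ n + 1 := by
  have hp : (0 : ℝ) < (N : ℝ) ^ k := by positivity
  have h1 := (coord_le_norm (x - y) i).trans h
  rw [PiLp.sub_apply, ← div_eq_mul_inv, le_div_iff₀ hp] at h1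
  have h2 : |(N : ℝ) ^ k * x i - (N : ℝ) ^ k * y i| ≤ n := by
    rw [← mul_sub, abs_mul, abs_of_pos hp, mul_comm]; exact h1
  have h3 := abs_le.1 h2
  have ha := Int.floor_le ((N : ℝ) ^ k * x i)
  have hb := Int.floor_le ((N : ℝ) ^ k * y i)
  have hc := Int.lt_floor_add_one ((N : ℝ) ^ k * x i)
  have hd := Int.lt_floor_add_one ((N : ℝ) ^ k * y i)
  rw [← Int.cast_le (R := ℝ)]
  simp only [gcode]
  push_cast
  rw [abs_le]
  constructor <;> linarith

lemma gcode_sep {n N k : ℕ} (hN : 0 < N) {x y : EuclideanSpace ℝ (Fin n)} (i : Fin n)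
    (h : 2 ≤ |gcode N k x i - gcode N k y i|) : ((N : ℝ) ^ k)⁻¹ ≤ ‖x - y‖ := by
  have hp : (0 : ℝ) < (N : ℝ) ^ k := by positivity
  refine le_trans ?_ (coord_le_norm (x - y) i)
  rw [PiLp.sub_apply, inv_le_iff_one_le_mul₀ hp, mul_comm]
  have h2 : |(N : ℝ) ^ k * x i - (N : ℝ) ^ k * y i| = (N : ℝ) ^ k * |x i - y i| := by
    rw [← mul_sub, abs_mul, abs_of_pos hp]
  rw [← h2]
  have ha := Int.floor_le ((N : ℝ) ^ k * x i)
  have hb := Int.floor_le ((N : ℝ) ^ k * y i)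
  have hc := Int.lt_floor_add_one ((N : ℝ) ^ k * x i)
  have hd := Int.lt_floor_add_one ((N : ℝ) ^ k * y i)
  rw [← Int.cast_le (R := ℝ)] at h
  simp only [gcode] at h
  push_cast at h
  rw [le_abs] at h ⊢
  rcases h with h | h
  · left; linarith
  · right; linarith

open Classical in
/-- Number of bad steps on the way to a cube. -/
noncomputable def badc {n : ℕ} (N k0 : ℕ) (Good : ℕ → Set (Fin n → ℤ)) :
    ℕ → (Fin n → ℤ) → ℕ
  | 0, _ => 0
  | j + 1, q => badc N k0 Good j (par N q) + if q ∈ Good (k0 + j) then 0 else 1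

/-- Descendants of a finite family of cubes. -/
noncomputable def desc {n : ℕ} (N : ℕ) (S0 : Finset (Fin n → ℤ)) : ℕ → Finset (Fin n → ℤ)
  | 0 => S0
  | j + 1 => (desc N S0 j).biUnion (children N)

lemma badc_sum {n N k0 : ℕ} (hN : 0 < N) (Good : ℕ → Set (Fin n → ℤ)) (P : ℝ)
    (hgood : ∀ k ≥ k0, ∀ q : Fin n → ℤ, ((children N q : Set (Fin n → ℤ)) ∩ Good k).ncard ≤ P)
    (S0 : Finset (Fin n → ℤ)) (j : ℕ) :
    ∑ q ∈ desc N S0 j, (((N : ℝ) ^ n)⁻¹) ^ badc N k0 Good j q ≤ S0.card * (P + 1) ^ j := by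
  classical
  have hp : (0 : ℝ) < (N : ℝ) ^ n := by positivity
  have hP : 0 ≤ P := (Nat.cast_nonneg _).trans (hgood k0 le_rfl 0)
  induction j with
  | zero => simp [desc, badc]
  | succ j ih =>
    have hdisj : ((desc N S0 j : Set (Fin n → ℤ))).PairwiseDisjoint (children N) := by
      intro a _ b _ hab
      rw [Function.onFun, Finset.disjoint_left]
      intro p hp1 hp2
      rw [mem_children hN] at hp1 hp2
      exact hab (hp1.symm.trans hp2)
    rw [desc, Finset.sum_biUnion hdisj]
    have hstep : ∀ q ∈ desc N S0 j,
        ∑ p ∈ children N q, (((N : ℝ) ^ n)⁻¹) ^ badc N k0 Good (j + 1) p ≤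
          (((N : ℝ) ^ n)⁻¹) ^ badc N k0 Good j q * (P + 1) := by
      intro q _
      have h1 : ∀ p ∈ children N q, (((N : ℝ) ^ n)⁻¹) ^ badc N k0 Good (j + 1) p ≤
          (((N : ℝ) ^ n)⁻¹) ^ badc N k0 Good j q *
            ((if p ∈ Good (k0 + j) then 1 else 0) + ((N : ℝ) ^ n)⁻¹) := by
        intro p hpq
        rw [mem_children hN] at hpq
        rw [badc, hpq, pow_add]
        gcongr
        split_ifs
        · simp
        · simp
      refine (Finset.sum_le_sum h1).trans ?_
      rw [← Finset.mul_sum, Finset.sum_add_distrib]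
      gcongr
      · rw [Finset.sum_boole]
        have := hgood (k0 + j) (by omega) q
        rw [← Set.ncard_coe_finset]
        have heq : (((children N q).filter (· ∈ Good (k0 + j)) : Finset (Fin n → ℤ)) :
            Set (Fin n → ℤ)) = (children N q : Set (Fin n → ℤ)) ∩ Good (k0 + j) := by
          ext p; simp
        rw [heq]
        exact this
      · simp only [Finset.sum_const, card_children, nsmul_eq_mul]
        push_cast
        rw [mul_inv_cancel₀ hp.ne']
    refine (Finset.sum_le_sum hstep).trans ?_
    rw [← Finset.sum_mul, pow_succ, ← mul_assoc]
    gcongr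

lemma dim_lemma {n N : ℕ} (hN : 2 ≤ N) (t : NNReal) (ht : 0 < t) (β P : ℝ) (hβ : 0 < β)
    (hPN : (P + 1) * (N : ℝ) ^ (n * β) < (N : ℝ) ^ (t : ℝ))
    (ρ : Measure (EuclideanSpace ℝ (Fin n))) [IsFiniteMeasure ρ] (hρ : ρ univ ≠ 0)
    (R : ℝ) (hR : ρ (closedBall 0 R)ᶜ = 0) (k0 : ℕ) (Good : ℕ → Set (Fin n → ℤ))
    (hgood : ∀ k ≥ k0, ∀ q : Fin n → ℤ, ((children N q : Set (Fin n → ℤ)) ∩ Good k).ncard ≤ P)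
    (hE : ∀ k ≥ k0, ρ {x | gcode N (k + 1) x ∉ Good k} ≤ ENNReal.ofReal (β / 2) * ρ univ) :
    ∃ D', MeasurableSet D' ∧ ρ D' ≠ 0 ∧ dimH D' ≤ t := by
  classical
  have hN0 : 0 < N := by omega
  have hNr : (0 : ℝ) < N := by exact_mod_cast hN0
  have hN1 : (1 : ℝ) ≤ N := by exact_mod_cast hN0
  have hP : 0 ≤ P := (Nat.cast_nonneg _).trans (hgood k0 le_rfl 0)
  -- counting function
  let cnt : ℕ → EuclideanSpace ℝ (Fin n) → ℕ := fun j x => badc N k0 Good j (gcode N (k0 + j) x)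
  have hcntm : ∀ j, Measurable (cnt j) := fun j =>
    (measurable_of_countable (badc N k0 Good j)).comp (measurable_gcode N (k0 + j))
  have hcnts : ∀ j x, cnt (j + 1) x = cnt j x +
      if gcode N (k0 + j + 1) x ∈ Good (k0 + j) then 0 else 1 := by
    intro j x
    simp only [cnt]
    rw [badc, ← add_assoc, par_gcode hN0]
  have hcnt_int : ∀ j, ∫⁻ x, (cnt j x : ℝ≥0∞) ∂ρ ≤ j * (ENNReal.ofReal (β / 2) * ρ univ) := by
    intro j
    induction j with
    | zero => simp [cnt, badc]
    | succ j ih =>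
      have h1 : ∀ x, (cnt (j + 1) x : ℝ≥0∞) = cnt j x +
          ({x | gcode N (k0 + j + 1) x ∉ Good (k0 + j)}.indicator 1 x) := by
        intro x
        rw [hcnts]
        by_cases hx : gcode N (k0 + j + 1) x ∈ Good (k0 + j) <;> simp [hx, indicator]
      have hms : MeasurableSet {x : EuclideanSpace ℝ (Fin n) | gcode N (k0 + j + 1) x ∉ Good (k0 + j)} :=
        measurable_gcode N (k0 + j + 1) (MeasurableSet.of_discrete (s := (Good (k0 + j))ᶜ))
      simp_rw [h1]
      rw [lintegral_add_right _ (measurable_one.indicator hms), lintegral_indicator_one hms]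
      push_cast
      rw [add_mul, one_mul]
      exact add_le_add ih (hE _ (by omega))
  let W : Set (EuclideanSpace ℝ (Fin n)) := closedBall 0 R
  have hWm : MeasurableSet W := isClosed_closedBall.measurableSet
  let G : ℕ → Set (EuclideanSpace ℝ (Fin n)) := fun j => W ∩ {x | (cnt j x : ℝ) < β * j}
  have hGm : ∀ j, MeasurableSet (G j) := by
    intro j
    refine hWm.inter ?_
    exact (hcntm j) (MeasurableSet.of_discrete (s := {c : ℕ | (c : ℝ) < β * j}))
  have hGρ : ∀ j, 1 ≤ j → ρ univ / 2 ≤ ρ (G j) := by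
    intro j hj
    have hj' : (0 : ℝ) < j := by exact_mod_cast hj
    have hmk := mul_meas_ge_le_lintegral (μ := ρ) (f := fun x => (cnt j x : ℝ≥0∞))
      (measurable_from_top.comp (hcntm j)) (ENNReal.ofReal (β * j))
    have h2 := hmk.trans (hcnt_int j)
    have h3 : (j : ℝ≥0∞) * (ENNReal.ofReal (β / 2) * ρ univ) =
        ENNReal.ofReal (β * j) * (ρ univ / 2) := by
      rw [← ENNReal.ofReal_natCast, ENNReal.ofReal_div_of_pos (by norm_num), ENNReal.ofReal_mul hβ.le]
      simp only [ENNReal.ofReal_ofNat, div_eq_mul_inv]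
      ring
    rw [h3] at h2
    have hb0 : ENNReal.ofReal (β * j) ≠ 0 := by
      simp only [ne_eq, ENNReal.ofReal_eq_zero, not_le]; positivity
    have h4 : ρ {x | ENNReal.ofReal (β * j) ≤ (cnt j x : ℝ≥0∞)} ≤ ρ univ / 2 :=
      (ENNReal.mul_le_mul_iff_right hb0 ENNReal.ofReal_ne_top).1 h2
    have hsub : univ ⊆ G j ∪ ({x | ENNReal.ofReal (β * j) ≤ (cnt j x : ℝ≥0∞)} ∪ Wᶜ) := by
      intro x _
      by_cases hW : x ∈ W
      · by_cases hc : (cnt j x : ℝ) < β * j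
        · exact Or.inl ⟨hW, hc⟩
        · right; left
          simp only [Set.mem_ofPred_eq]
          rw [← ENNReal.ofReal_natCast]
          exact ENNReal.ofReal_le_ofReal (not_lt.1 hc)
      · exact Or.inr (Or.inr hW)
    have h5 : ρ univ ≤ ρ (G j) + ρ univ / 2 := by
      refine (measure_mono hsub).trans ((measure_union_le _ _).trans ?_)
      gcongr
      refine (measure_union_le _ _).trans ?_
      rw [hR, add_zero]
      exact h4
    have h6 : ρ univ / 2 + ρ univ / 2 ≤ ρ (G j) + ρ univ / 2 := by
      rwa [ENNReal.add_halves]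
    exact (ENNReal.add_le_add_iff_right (by
      exact (ENNReal.div_lt_top (measure_ne_top _ _) (by norm_num)).ne)).1 h6
  let U : ℕ → Set (EuclideanSpace ℝ (Fin n)) := fun K => ⋃ j, G (K + j)
  have hUm : ∀ K, MeasurableSet (U K) := fun K => MeasurableSet.iUnion fun j => hGm _
  have hUanti : Antitone U := by
    intro a b hab x hx
    simp only [U, mem_iUnion] at hx ⊢
    obtain ⟨j, hj⟩ := hx
    refine ⟨b - a + j, ?_⟩
    rwa [show a + (b - a + j) = b + j by omega]
  refine ⟨⋂ K, U K, MeasurableSet.iInter hUm, ?_, ?_⟩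
  · have htend := tendsto_measure_iInter_atTop (μ := ρ) (fun K => (hUm K).nullMeasurableSet) hUanti
      ⟨0, measure_ne_top _ _⟩
    have hge : ρ univ / 2 ≤ ρ (⋂ K, U K) := by
      refine ge_of_tendsto' htend fun K => ?_
      refine (hGρ (K + 1) (by omega)).trans (measure_mono ?_)
      exact subset_iUnion (fun j => G (K + j)) 1
    intro h0
    rw [h0] at hge
    have : ρ univ / 2 = 0 := le_antisymm hge (zero_le)
    simp [ENNReal.div_eq_zero_iff] at this
    exact hρ (by simpa using this)
  · -- dimension bound
    let B : ℤ := ⌈(N : ℝ) ^ k0 * R⌉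
    let S0 : Finset (Fin n → ℤ) := Fintype.piFinset fun _ => Finset.Icc (-(B + 1)) (B + 1)
    have hmemS : ∀ x ∈ W, ∀ j, gcode N (k0 + j) x ∈ desc N S0 j := by
      intro x hx j
      induction j with
      | zero =>
        simp only [desc, S0, Fintype.mem_piFinset, Finset.mem_Icc, add_zero]
        intro i
        have h1 : |x i| ≤ R := (coord_le_norm x i).trans (mem_closedBall_zero_iff.1 hx)
        have h2 := abs_le.1 h1
        have hp : (0 : ℝ) < (N : ℝ) ^ k0 := by positivity
        have h3 : (N : ℝ) ^ k0 * R ≤ B := Int.le_ceil _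
        have h4 : (N : ℝ) ^ k0 * x i ≤ (N : ℝ) ^ k0 * R := by gcongr; exact h2.2
        have h5 : (N : ℝ) ^ k0 * (-R) ≤ (N : ℝ) ^ k0 * x i := by gcongr; exact h2.1
        have ha := Int.floor_le ((N : ℝ) ^ k0 * x i)
        have hc := Int.lt_floor_add_one ((N : ℝ) ^ k0 * x i)
        simp only [gcode]
        constructor
        · rw [← Int.cast_le (R := ℝ)]; push_cast; linarith
        · rw [← Int.cast_le (R := ℝ)]; push_cast; linarith
      | succ j ih =>
        rw [desc, Finset.mem_biUnion]
        refine ⟨_, ih, ?_⟩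
        rw [mem_children hN0, ← add_assoc, par_gcode hN0]
    let few : ℕ → Finset (Fin n → ℤ) := fun j =>
      (desc N S0 j).filter (fun q => (badc N k0 Good j q : ℝ) < β * j)
    have hfew : ∀ j, ((few j).card : ℝ) ≤ S0.card * ((P + 1) * (N : ℝ) ^ (n * β)) ^ j := by
      intro j
      have h1 := badc_sum hN0 Good P hgood S0 j
      have h2 : ∑ _q ∈ few j, ((N : ℝ) ^ (n * β * j))⁻¹ ≤
          ∑ q ∈ desc N S0 j, (((N : ℝ) ^ n)⁻¹) ^ badc N k0 Good j q := by
        refine (Finset.sum_le_sum fun q hq => ?_).trans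
          (Finset.sum_le_sum_of_subset_of_nonneg (Finset.filter_subset _ _)
            fun _ _ _ => by positivity)
        rw [inv_pow]
        apply inv_anti₀ (by positivity)
        rw [← pow_mul, ← Real.rpow_natCast]
        apply Real.rpow_le_rpow_of_exponent_le hN1
        push_cast
        rw [mul_assoc]
        have := (Finset.mem_filter.1 hq).2
        gcongr
      have h3 := h2.trans h1
      rw [Finset.sum_const, nsmul_eq_mul, ← div_eq_mul_inv, div_le_iff₀ (by positivity)] at h3
      refine h3.trans (le_of_eq ?_)
      rw [mul_pow, ← Real.rpow_natCast ((N : ℝ) ^ (n * β)), ← Real.rpow_mul hNr.le, mul_assoc]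
    obtain ⟨ξ, hξ⟩ : ∃ ξ, ξ = (P + 1) * (N : ℝ) ^ (n * β) / (N : ℝ) ^ (t : ℝ) := ⟨_, rfl⟩
    have hξ0 : 0 ≤ ξ := by rw [hξ]; positivity
    have hξ1 : ξ < 1 := by rw [hξ, div_lt_one (by positivity)]; exact hPN
    apply dimH_le_of_hausdorffMeasure_ne_top
    let cover : ℕ → ℕ × (Fin n → ℤ) → Set (EuclideanSpace ℝ (Fin n)) := fun K a =>
      if a.2 ∈ few (K + a.1) then {x | gcode N (k0 + (K + a.1)) x = a.2} else ∅
    have hmono : ∀ a b : ℕ, a ≤ b → (n : ℝ) * ((N : ℝ) ^ b)⁻¹ ≤ n * ((N : ℝ) ^ a)⁻¹ := by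
      intro a b hab
      exact mul_le_mul_of_nonneg_left
        (inv_anti₀ (by positivity) (pow_le_pow_right₀ hN1 hab)) (Nat.cast_nonneg n)
    have hdiam : ∀ k q, ediam {x : EuclideanSpace ℝ (Fin n) | gcode N k x = q} ≤
        ENNReal.ofReal (n * ((N : ℝ) ^ k)⁻¹) := by
      intro k q
      refine ediam_le fun x hx y hy => ?_
      rw [edist_dist, dist_eq_norm]
      exact ENNReal.ofReal_le_ofReal (norm_le_of_gcode_eq hN0 (hx.trans hy.symm))
    have hsummable : Summable (fun j : ℕ => (S0.card * (n : ℝ) ^ (t : ℝ)) * ξ ^ j) :=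
      (summable_geometric_of_lt_one hξ0 hξ1).mul_left _
    have hmain := Measure.hausdorffMeasure_le_liminf_tsum (t : ℝ) (⋂ K, U K)
      (l := atTop) (fun K : ℕ => ENNReal.ofReal (n * ((N : ℝ) ^ K)⁻¹)) ?_ cover ?_ ?_
    · refine (hmain.trans_lt ?_).ne
      refine lt_of_le_of_lt (b := ∑' j : ℕ, ENNReal.ofReal ((S0.card * (n : ℝ) ^ (t : ℝ)) * ξ ^ j))
        ?_ (lt_top_iff_ne_top.2 hsummable.tsum_ofReal_ne_top)
      refine liminf_le_of_le (by isBoundedDefault) fun b hb => ?_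
      obtain ⟨K, hK⟩ := hb.exists
      refine hK.trans ?_
      rw [ENNReal.tsum_prod (f := fun j q => ediam (cover K (j, q)) ^ (t : ℝ))]
      refine le_trans (ENNReal.tsum_le_tsum fun j => ?_)
        (ENNReal.tsum_comp_le_tsum_of_injective (f := fun j => K + j)
          (fun a b h => by simpa using h) _)
      have h1 : ∀ q ∉ few (K + j), ediam (cover K (j, q)) ^ (t : ℝ) = 0 := by
        intro q hq
        simp [cover, hq, ht]
      rw [tsum_eq_sum h1]
      have h2 : ∀ q ∈ few (K + j), ediam (cover K (j, q)) ^ (t : ℝ) ≤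
          ENNReal.ofReal ((n * ((N : ℝ) ^ (K + j))⁻¹) ^ (t : ℝ)) := by
        intro q hq
        rw [← ENNReal.ofReal_rpow_of_nonneg (by positivity) (by positivity)]
        gcongr
        simp only [cover, hq, if_true]
        refine (hdiam _ _).trans (ENNReal.ofReal_le_ofReal ?_)
        exact hmono _ _ (by omega)
      refine (Finset.sum_le_sum h2).trans ?_
      rw [Finset.sum_const, nsmul_eq_mul, ← ENNReal.ofReal_natCast, ← ENNReal.ofReal_mul (by positivity)]
      apply ENNReal.ofReal_le_ofReal
      calc ((few (K + j)).card : ℝ) * (n * ((N : ℝ) ^ (K + j))⁻¹) ^ (t : ℝ)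
          ≤ (S0.card * ((P + 1) * (N : ℝ) ^ (n * β)) ^ (K + j)) *
            (n * ((N : ℝ) ^ (K + j))⁻¹) ^ (t : ℝ) := by
            gcongr
            exact hfew _
        _ = _ := by
            rw [hξ, Real.mul_rpow (by positivity) (by positivity), Real.inv_rpow (by positivity),
              ← Real.rpow_pow_comm hNr.le, div_pow]
            ring
    · have : Tendsto (fun K : ℕ => (n : ℝ) * ((N : ℝ) ^ K)⁻¹) atTop (nhds (n * 0)) := by
        refine Tendsto.const_mul _ ?_
        refine (tendsto_pow_atTop_atTop_of_one_lt ?_).inv_tendsto_atTop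
        exact_mod_cast hN
      have := ENNReal.tendsto_ofReal this
      simpa using this
    · refine Eventually.of_forall fun K a => ?_
      simp only [cover]
      split_ifs
      · refine (hdiam _ _).trans (ENNReal.ofReal_le_ofReal ?_)
        exact hmono _ _ (by omega)
      · simp
    · refine Eventually.of_forall fun K x hx => ?_
      have := mem_iInter.1 hx K
      simp only [U, mem_iUnion] at this
      obtain ⟨j, hjW, hj⟩ := this
      refine mem_iUnion.2 ⟨(j, gcode N (k0 + (K + j)) x), ?_⟩
      have : gcode N (k0 + (K + j)) x ∈ few (K + j) :=
        Finset.mem_filter.2 ⟨hmemS x hjW (K + j), hj⟩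
      simp [cover, this]

/-- Neighbouring offsets. -/
noncomputable def nbr (n : ℕ) : Finset (Fin n → ℤ) :=
  Fintype.piFinset (fun _ : Fin n => Finset.Icc (-((n : ℤ) + 1)) (n + 1))

lemma card_nbr (n : ℕ) : (nbr n).card = (2 * n + 3) ^ n := by
  simp only [nbr, Fintype.card_piFinset, Int.card_Icc, Finset.prod_const, Finset.card_univ,
    Fintype.card_fin]
  congr 1
  omega

/-- Mass of the cubes neighbouring a given one. -/
noncomputable def nuStar {n : ℕ} (ν : Measure (EuclideanSpace ℝ (Fin n))) (N k : ℕ)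
    (q : Fin n → ℤ) : ℝ≥0∞ :=
  ∑ v ∈ nbr n, ν {x | gcode N k x = q + v}

lemma ball_le_nuStar {n N k : ℕ} (hN : 0 < N) (ν : Measure (EuclideanSpace ℝ (Fin n)))
    (y : EuclideanSpace ℝ (Fin n)) :
    ν (closedBall y (n * ((N : ℝ) ^ k)⁻¹)) ≤ nuStar ν N k (gcode N k y) := by
  refine le_trans (measure_mono ?_) (measure_biUnion_finset_le _ _)
  intro x hx
  rw [mem_closedBall, dist_eq_norm] at hx
  simp only [mem_iUnion, exists_prop]
  refine ⟨gcode N k x - gcode N k y, ?_, ?_⟩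
  · simp only [nbr, Fintype.mem_piFinset, Finset.mem_Icc]
    intro i
    exact abs_le.1 (gcode_near hN hx i)
  · show gcode N k x = _
    abel

lemma tsum_gcode {n : ℕ} (N k : ℕ) (ν : Measure (EuclideanSpace ℝ (Fin n))) :
    ∑' q, ν {x | gcode N k x = q} = ν univ := by
  rw [← measure_iUnion]
  · congr 1
    ext x; simp
  · intro a b hab
    rw [Function.onFun, Set.disjoint_left]
    intro x h1 h2
    exact hab (h1.symm.trans h2)
  · intro q
    exact measurable_gcode N k (MeasurableSet.singleton q)

lemma tsum_nuStar {n : ℕ} (N k : ℕ) (ν : Measure (EuclideanSpace ℝ (Fin n))) :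
    ∑' q, nuStar ν N k q = (2 * n + 3 : ℕ) ^ n * ν univ := by
  unfold nuStar
  rw [Summable.tsum_finsetSum (fun _ _ => ENNReal.summable)]
  have : ∀ v ∈ nbr n, ∑' q, ν {x | gcode N k x = q + v} = ν univ := by
    intro v _
    rw [← tsum_gcode N k ν]
    exact (Equiv.addRight v).tsum_eq (fun q => ν {x | gcode N k x = q})
  rw [Finset.sum_congr rfl this, Finset.sum_const, card_nbr, nsmul_eq_mul]
  push_cast
  rfl

lemma tsum_par {n N : ℕ} (hN : 0 < N) (g : (Fin n → ℤ) → ℝ≥0∞) :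
    ∑' p, g (par N p) ≤ (N : ℝ≥0∞) ^ n * ∑' q, g q := by
  have : NeZero N := ⟨hN.ne'⟩
  let φ : (Fin n → ℤ) → (Fin n → ℤ) × (Fin n → Fin N) :=
    fun p => (par N p, fun i => (Int.divModEquiv N (p i)).2)
  have hφ : Function.Injective φ := by
    intro p p' h
    funext i
    apply (Int.divModEquiv N).injective
    refine Prod.ext ?_ ?_
    · have := congrFun (congrArg Prod.fst h) i
      simpa [φ, par, Int.divModEquiv] using this
    · exact congrFun (congrArg Prod.snd h) i
  refine (ENNReal.tsum_comp_le_tsum_of_injective hφ (fun a => g a.1)).trans (le_of_eq ?_)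
  rw [ENNReal.tsum_prod (f := fun q _ => g q), ← ENNReal.tsum_mul_left]
  refine tsum_congr fun q => ?_
  rw [tsum_fintype]
  simp

lemma light_bound {n N : ℕ} (hN : 0 < N) (k : ℕ) (ν : Measure (EuclideanSpace ℝ (Fin n)))
    (c : ℝ≥0∞) :
    ν {z | ν {x | gcode N (k + 2) x = gcode N (k + 2) z} ≤ c * nuStar ν N k (gcode N k z)} ≤
      c * ((N : ℝ≥0∞) ^ n * ((N : ℝ≥0∞) ^ n * ((2 * n + 3 : ℕ) ^ n * ν univ))) := by
  let L : Set (Fin n → ℤ) :=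
    {p | ν {x | gcode N (k + 2) x = p} ≤ c * nuStar ν N k (par N (par N p))}
  have hpar : ∀ z : EuclideanSpace ℝ (Fin n), par N (par N (gcode N (k + 2) z)) = gcode N k z := by
    intro z
    rw [show k + 2 = (k + 1) + 1 from rfl, par_gcode hN, par_gcode hN]
  have hsub : {z | ν {x | gcode N (k + 2) x = gcode N (k + 2) z} ≤
      c * nuStar ν N k (gcode N k z)} ⊆ ⋃ p ∈ L, {x | gcode N (k + 2) x = p} := by
    intro z hz
    simp only [mem_iUnion, exists_prop]
    refine ⟨gcode N (k + 2) z, ?_, rfl⟩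
    show ν {x | gcode N (k + 2) x = gcode N (k + 2) z} ≤
      c * nuStar ν N k (par N (par N (gcode N (k + 2) z)))
    rw [hpar]
    exact hz
  refine (measure_mono hsub).trans ((measure_biUnion_le ν L.to_countable _).trans ?_)
  have h1 : ∑' p : L, ν {x | gcode N (k + 2) x = (p : Fin n → ℤ)} ≤
      ∑' p : L, c * nuStar ν N k (par N (par N (p : Fin n → ℤ))) :=
    ENNReal.tsum_le_tsum fun p => p.2
  refine h1.trans ?_
  refine (ENNReal.tsum_comp_le_tsum_of_injective Subtype.val_injective
    (fun p => c * nuStar ν N k (par N (par N p)))).trans ?_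
  rw [ENNReal.tsum_mul_left]
  gcongr
  refine (tsum_par hN (fun p => nuStar ν N k (par N p))).trans ?_
  gcongr
  refine (tsum_par hN (fun p => nuStar ν N k p)).trans ?_
  gcongr
  rw [tsum_nuStar]

/-- Codes of level `k+1` cubes containing a heavy point of `D`. -/
def goodSet {n : ℕ} (ν : Measure (EuclideanSpace ℝ (Fin n)))
    (D : Set (EuclideanSpace ℝ (Fin n))) (c : ℝ≥0∞) (N k : ℕ) : Set (Fin n → ℤ) :=
  {p | ∃ z ∈ D, gcode N (k + 1) z = p ∧
    c * nuStar ν N k (gcode N k z) < ν {x | gcode N (k + 2) x = gcode N (k + 2) z}}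

lemma good_count {n m N k : ℕ} {α M δ : ℝ} (hM : 0 < M) (hN : 0 < N)
    (hn : 0 < n) (hδN : n ≤ δ * N)
    (hgeom : ∀ (N : ℕ), 1 ≤ N → ∀ ρ : ℝ, 0 < ρ →
      ∀ (F : Finset (EuclideanSpace ℝ (Fin n))),
      (∀ y ∈ F, ∀ z ∈ F, y ≠ z → ρ ≤ ‖z - y‖) →
      (∀ y ∈ F, ∀ z ∈ F, ‖z - y‖ ≤ n * N * ρ) →
      ∀ (θ : EuclideanSpace ℝ (Fin n) → EuclideanSpace ℝ (Fin n))
        (V : EuclideanSpace ℝ (Fin n) → Submodule ℝ (EuclideanSpace ℝ (Fin n))),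
      (∀ y ∈ F, ‖θ y‖ = 1) → (∀ y ∈ F, Module.finrank ℝ (V y) = n - m) →
      (∀ y ∈ F, ∀ z ∈ F, y ≠ z → ∃ z', ‖z' - z‖ ≤ δ * ρ ∧
        ¬ (z' ∈ coneX y (V y) α ∧ z' ∉ almostHalfSpace y (θ y) α)) →
      (F.card : ℝ) ≤ M * (N : ℝ) ^ m)
    (ν : Measure (EuclideanSpace ℝ (Fin n))) (D : Set (EuclideanSpace ℝ (Fin n)))
    (c : ℝ≥0∞) (r1 : ℝ) (hr1 : n * ((N : ℝ) ^ k)⁻¹ < r1)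
    (hD : ∀ x ∈ D, ∀ r, 0 < r → r < r1 → ∃ (θ : EuclideanSpace ℝ (Fin n))
      (V : Submodule ℝ (EuclideanSpace ℝ (Fin n))), ‖θ‖ = 1 ∧ Module.finrank ℝ V = n - m ∧
      ν ((closedBall x r ∩ coneX x V α) \ almostHalfSpace x θ α) ≤ c * ν (closedBall x r))
    (q : Fin n → ℤ) :
    ((((children N q : Set (Fin n → ℤ)) ∩ goodSet ν D c N k).ncard : ℕ) : ℝ) ≤
      2 ^ n * (M * (N : ℝ) ^ m) := by
  classical
  have hNr : (0 : ℝ) < N := by exact_mod_cast hN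
  have hnr : (0 : ℝ) < n := by exact_mod_cast hn
  obtain ⟨r, hr⟩ : ∃ r, r = n * ((N : ℝ) ^ k)⁻¹ := ⟨_, rfl⟩
  have hr0 : 0 < r := by rw [hr]; positivity
  obtain ⟨ρ, hρ⟩ : ∃ ρ, ρ = ((N : ℝ) ^ (k + 1))⁻¹ := ⟨_, rfl⟩
  have hρ0 : 0 < ρ := by rw [hρ]; positivity
  have hrρ : r = n * N * ρ := by
    rw [hr, hρ, pow_succ]; field_simp
  have hD' : ∀ x, ∃ (θ : EuclideanSpace ℝ (Fin n))
      (V : Submodule ℝ (EuclideanSpace ℝ (Fin n))), x ∈ D →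
      ‖θ‖ = 1 ∧ Module.finrank ℝ V = n - m ∧
      ν ((closedBall x r ∩ coneX x V α) \ almostHalfSpace x θ α) ≤ c * ν (closedBall x r) := by
    intro x
    by_cases hx : x ∈ D
    · obtain ⟨θ, V, h⟩ := hD x hx r hr0 (by rw [hr]; exact hr1)
      exact ⟨θ, V, fun _ => h⟩
    · exact ⟨0, ⊥, fun h => absurd h hx⟩
  choose θ V hθV using hD'
  have hz : ∀ p : Fin n → ℤ, ∃ z, p ∈ goodSet ν D c N k → z ∈ D ∧ gcode N (k + 1) z = p ∧
      c * nuStar ν N k (gcode N k z) < ν {x | gcode N (k + 2) x = gcode N (k + 2) z} := by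
    intro p
    by_cases hp : p ∈ goodSet ν D c N k
    · obtain ⟨z, h1, h2⟩ := hp
      exact ⟨z, fun _ => ⟨h1, h2⟩⟩
    · exact ⟨0, fun h => absurd h hp⟩
  choose z hz using hz
  let G := (children N q).filter (· ∈ goodSet ν D c N k)
  have hGeq : ((children N q : Set (Fin n → ℤ)) ∩ goodSet ν D c N k) = (G : Set (Fin n → ℤ)) := by
    ext p; simp [G]
  rw [hGeq, Set.ncard_coe_finset]
  let parity : (Fin n → ℤ) → (Fin n → Bool) := fun p i => decide (p i % 2 = 0)
  have hfib : ∀ b ∈ (Finset.univ : Finset (Fin n → Bool)),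
      (G.filter (fun p => parity p = b)).card ≤ ⌊M * (N : ℝ) ^ m⌋₊ := by
    intro b _
    apply Nat.le_floor
    have hmem : ∀ p ∈ G.filter (fun p => parity p = b), z p ∈ D ∧ gcode N (k + 1) (z p) = p ∧
        c * nuStar ν N k (gcode N k (z p)) <
          ν {x | gcode N (k + 2) x = gcode N (k + 2) (z p)} ∧ gcode N k (z p) = q ∧
        parity p = b := by
      intro p hp
      simp only [G, Finset.mem_filter] at hp
      obtain ⟨⟨h1, h2⟩, h3⟩ := hp
      obtain ⟨h4, h5, h6⟩ := hz p h2
      refine ⟨h4, h5, h6, ?_, h3⟩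
      rw [mem_children hN] at h1
      rw [← par_gcode hN, h5, h1]
    have hinj : Set.InjOn z (G.filter (fun p => parity p = b)) := by
      intro p hp p' hp' h
      rw [← (hmem p hp).2.1, ← (hmem p' hp').2.1, h]
    rw [← Finset.card_image_of_injOn hinj]
    have hdiam : ∀ y ∈ (G.filter (fun p => parity p = b)).image z,
        ∀ w ∈ (G.filter (fun p => parity p = b)).image z, ‖w - y‖ ≤ r := by
      intro y hy w hw
      obtain ⟨p, hp, rfl⟩ := Finset.mem_image.1 hy
      obtain ⟨p', hp', rfl⟩ := Finset.mem_image.1 hw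
      rw [hr]
      exact norm_le_of_gcode_eq hN ((hmem p' hp').2.2.2.1.trans (hmem p hp).2.2.2.1.symm)
    refine hgeom N hN ρ hρ0 _ ?_ ?_ θ V ?_ ?_ ?_
    · intro y hy w hw hyw
      obtain ⟨p, hp, rfl⟩ := Finset.mem_image.1 hy
      obtain ⟨p', hp', rfl⟩ := Finset.mem_image.1 hw
      have hpp : p' ≠ p := by rintro rfl; exact hyw rfl
      obtain ⟨i, hi⟩ := Function.ne_iff.1 hpp
      rw [hρ]
      apply gcode_sep hN i
      rw [(hmem p hp).2.1, (hmem p' hp').2.1]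
      have h1 := congrFun ((hmem p hp).2.2.2.2.trans (hmem p' hp').2.2.2.2.symm) i
      simp only [parity, decide_eq_decide] at h1
      rw [le_abs]
      omega
    · intro y hy w hw
      rw [← hrρ]
      exact hdiam y hy w hw
    · intro y hy
      obtain ⟨p, hp, rfl⟩ := Finset.mem_image.1 hy
      exact (hθV _ (hmem p hp).1).1
    · intro y hy
      obtain ⟨p, hp, rfl⟩ := Finset.mem_image.1 hy
      exact (hθV _ (hmem p hp).1).2.1
    · intro y hy w hw _
      obtain ⟨p, hp, rfl⟩ := Finset.mem_image.1 hy
      obtain ⟨p', hp', rfl⟩ := Finset.mem_image.1 hw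
      by_contra! hcon
      obtain ⟨g1, g2, g3, g4, g5⟩ := hmem p hp
      obtain ⟨f1, f2, f3, f4, f5⟩ := hmem p' hp'
      have hsub : {x | gcode N (k + 2) x = gcode N (k + 2) (z p')} ⊆
          (closedBall (z p) r ∩ coneX (z p) (V (z p)) α) \ almostHalfSpace (z p) (θ (z p)) α := by
        intro x hx
        have hx' : gcode N (k + 2) x = gcode N (k + 2) (z p') := hx
        have h1 : ‖x - z p'‖ ≤ δ * ρ := by
          refine (norm_le_of_gcode_eq hN hx').trans ?_
          have : ((N : ℝ) ^ (k + 2))⁻¹ = ρ / N := by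
            rw [hρ, pow_succ, pow_succ]; field_simp
          rw [this, ← mul_div_assoc, div_le_iff₀ hNr]
          nlinarith
        have h2 : gcode N k x = gcode N k (z p) := by
          have h3 : gcode N (k + 1) x = gcode N (k + 1) (z p') := by
            rw [← par_gcode hN (k + 1) x, ← par_gcode hN (k + 1) (z p')]
            exact congrArg _ hx'
          rw [← par_gcode hN k x, h3, par_gcode hN, f4, g4]
        obtain ⟨h4, h5⟩ := hcon x h1
        refine ⟨⟨?_, h4⟩, h5⟩
        rw [mem_closedBall, dist_eq_norm, hr]
        exact norm_le_of_gcode_eq hN h2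
      have h6 := (measure_mono hsub).trans (hθV (z p) g1).2.2
      have h7 : ν (closedBall (z p) r) ≤ nuStar ν N k (gcode N k (z p')) := by
        rw [hr, f4, ← g4]
        exact ball_le_nuStar hN ν (z p)
      have h8 := h6.trans (mul_le_mul_right h7 c)
      exact absurd f3 (not_lt.2 h8)
  have hcard := Finset.card_le_mul_card_image_of_maps_to (f := parity) (s := G)
    (t := Finset.univ) (fun _ _ => Finset.mem_univ _) _ hfib
  have hu : (Finset.univ : Finset (Fin n → Bool)).card = 2 ^ n := by simp
  rw [hu] at hcard
  calc (G.card : ℝ) ≤ ((⌊M * (N : ℝ) ^ m⌋₊ * 2 ^ n : ℕ) : ℝ) := by exact_mod_cast hcard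
    _ = ⌊M * (N : ℝ) ^ m⌋₊ * 2 ^ n := by push_cast; rfl
    _ ≤ (M * (N : ℝ) ^ m) * 2 ^ n := by
        gcongr
        exact Nat.floor_le (by positivity)
    _ = _ := by ring

lemma core (n m : ℕ) (hm : m < n) (s α : ℝ) (hs : (m : ℝ) < s)
    (hα0 : 0 < α) (hα1 : α ≤ 1) :
    ∃ c : ℝ, 0 < c ∧ ∀ (ν : Measure (EuclideanSpace ℝ (Fin n))) [IsFiniteMeasure ν]
      (D : Set (EuclideanSpace ℝ (Fin n))) (R r1 : ℝ), 0 < r1 → ν D ≠ 0 →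
      ν univ ≤ 4 * ν D → D ⊆ closedBall 0 R →
      (∀ x ∈ D, ∀ r, 0 < r → r < r1 → ∃ (θ : EuclideanSpace ℝ (Fin n))
      (V : Submodule ℝ (EuclideanSpace ℝ (Fin n))), ‖θ‖ = 1 ∧ Module.finrank ℝ V = n - m ∧
      ν ((closedBall x r ∩ coneX x V α) \ almostHalfSpace x θ α) ≤
        ENNReal.ofReal c * ν (closedBall x r)) →
      ∃ D', MeasurableSet D' ∧ ν D' ≠ 0 ∧ dimH D' < ENNReal.ofReal s := by
  obtain ⟨M, δ, hM, hδ, hgeom⟩ := geom n m hm α hα0 hα1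
  have hn : 0 < n := by omega
  have hnr : (0 : ℝ) < n := by exact_mod_cast hn
  have hm0 : (0 : ℝ) ≤ m := Nat.cast_nonneg m
  obtain ⟨σ, hσ⟩ : ∃ σ, σ = s - m := ⟨_, rfl⟩
  have hσ0 : 0 < σ := by linarith
  have hev : ∀ᶠ N : ℕ in atTop, 2 ^ n * M + 1 < (N : ℝ) ^ (σ / 4) :=
    ((tendsto_rpow_atTop (by positivity)).comp tendsto_natCast_atTop_atTop).eventually_gt_atTop _
  have hev2 : ∀ᶠ N : ℕ in atTop, (n : ℝ) / δ ≤ N :=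
    tendsto_natCast_atTop_atTop.eventually_ge_atTop _
  obtain ⟨N, hN1, hN2, hN3⟩ := (hev.and (hev2.and (eventually_ge_atTop 2))).exists
  have hN0 : 0 < N := by omega
  have hNr : (0 : ℝ) < N := by exact_mod_cast hN0
  have hN1r : (1 : ℝ) ≤ N := by exact_mod_cast hN0
  obtain ⟨β, hβ⟩ : ∃ β, β = σ / (4 * n) := ⟨_, rfl⟩
  have hβ0 : 0 < β := by rw [hβ]; positivity
  have hnβ : n * β = σ / 4 := by rw [hβ]; field_simp
  obtain ⟨K, hK⟩ : ∃ K : ℝ, K = 4 * ((N : ℝ) ^ n * ((N : ℝ) ^ n * (2 * n + 3) ^ n)) := ⟨_, rfl⟩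
  have hK0 : 0 < K := by rw [hK]; positivity
  refine ⟨β / 2 / K, by positivity, ?_⟩
  intro ν _ D R r1 hr1 hD0 hD4 hDR hD
  obtain ⟨c, hc⟩ : ∃ c, c = ENNReal.ofReal (β / 2 / K) := ⟨_, rfl⟩
  rw [← hc] at hD
  have ht0 : 0 < (m + s) / 2 := by linarith
  let t : NNReal := ⟨(m + s) / 2, ht0.le⟩
  have ht : (t : ℝ) = (m + s) / 2 := rfl
  obtain ⟨k0, hk0⟩ : ∃ k0 : ℕ, n * ((N : ℝ) ^ k0)⁻¹ < r1 := by
    have : Tendsto (fun K : ℕ => (n : ℝ) * ((N : ℝ) ^ K)⁻¹) atTop (nhds (n * 0)) := by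
      refine Tendsto.const_mul _ ?_
      refine (tendsto_pow_atTop_atTop_of_one_lt ?_).inv_tendsto_atTop
      exact_mod_cast hN3
    rw [mul_zero] at this
    exact (this.eventually_lt_const hr1).exists
  have hPN : (2 ^ n * (M * (N : ℝ) ^ m) + 1) * (N : ℝ) ^ (n * β) < (N : ℝ) ^ (t : ℝ) := by
    have h1 : (N : ℝ) ^ (t : ℝ) = (N : ℝ) ^ m * ((N : ℝ) ^ (σ / 4) * (N : ℝ) ^ (σ / 4)) := by
      rw [← Real.rpow_natCast, ← Real.rpow_add hNr, ← Real.rpow_add hNr, ht, hσ]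
      congr 1; ring
    have h2 : 2 ^ n * (M * (N : ℝ) ^ m) + 1 ≤ (2 ^ n * M + 1) * (N : ℝ) ^ m := by
      have := one_le_pow₀ (n := m) hN1r
      nlinarith
    rw [h1, hnβ]
    have h3 : 0 < (N : ℝ) ^ (σ / 4) := by positivity
    have h4 : 0 < (N : ℝ) ^ m := by positivity
    calc (2 ^ n * (M * (N : ℝ) ^ m) + 1) * (N : ℝ) ^ (σ / 4)
        ≤ ((2 ^ n * M + 1) * (N : ℝ) ^ m) * (N : ℝ) ^ (σ / 4) := by gcongr
      _ < ((N : ℝ) ^ (σ / 4) * (N : ℝ) ^ m) * (N : ℝ) ^ (σ / 4) := by gcongr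
      _ = _ := by ring
  have hρu : (ν.restrict D) univ = ν D := by simp
  obtain ⟨D', hD'm, hD'0, hdim⟩ := dim_lemma hN3 t ht0 β (2 ^ n * (M * (N : ℝ) ^ m)) hβ0 hPN
    (ν.restrict D) (by rw [hρu]; exact hD0) R
    (by
      rw [Measure.restrict_apply isClosed_closedBall.measurableSet.compl]
      have : (closedBall 0 R)ᶜ ∩ D = ∅ := by
        ext x; simp only [mem_inter_iff, mem_compl_iff, mem_empty_iff_false, iff_false, not_and]
        exact fun h1 h2 => h1 (hDR h2)
      rw [this, measure_empty])
    k0 (goodSet ν D c N)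
    (fun k hk q => by
      refine good_count hM hN0 hn ?_ hgeom ν D c r1 ?_ hD q
      · rw [div_le_iff₀ hδ] at hN2; linarith
      · refine lt_of_le_of_lt ?_ hk0
        exact mul_le_mul_of_nonneg_left
          (inv_anti₀ (by positivity) (pow_le_pow_right₀ hN1r hk)) hnr.le)
    (fun k _ => by
      have hms : MeasurableSet {x : EuclideanSpace ℝ (Fin n) |
          gcode N (k + 1) x ∉ goodSet ν D c N k} :=
        measurable_gcode N (k + 1) (MeasurableSet.of_discrete (s := (goodSet ν D c N k)ᶜ))
      rw [Measure.restrict_apply hms, hρu]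
      have hsub : {x : EuclideanSpace ℝ (Fin n) | gcode N (k + 1) x ∉ goodSet ν D c N k} ∩ D ⊆
          {z | ν {x | gcode N (k + 2) x = gcode N (k + 2) z} ≤
            c * nuStar ν N k (gcode N k z)} := by
        rintro z ⟨h1, h2⟩
        show ν {x | gcode N (k + 2) x = gcode N (k + 2) z} ≤ c * nuStar ν N k (gcode N k z)
        by_contra hcon
        exact h1 ⟨z, h2, rfl, not_le.1 hcon⟩
      refine (measure_mono hsub).trans ((light_bound hN0 k ν c).trans ?_)
      calc c * ((N : ℝ≥0∞) ^ n * ((N : ℝ≥0∞) ^ n * ((2 * n + 3 : ℕ) ^ n * ν univ)))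
          ≤ c * ((N : ℝ≥0∞) ^ n * ((N : ℝ≥0∞) ^ n * ((2 * n + 3 : ℕ) ^ n * (4 * ν D)))) := by
            gcongr
        _ = c * ENNReal.ofReal K * ν D := by
            have : ENNReal.ofReal K =
                4 * ((N : ℝ≥0∞) ^ n * ((N : ℝ≥0∞) ^ n * ((2 * n + 3 : ℕ) : ℝ≥0∞) ^ n)) := by
              have hKn : K = ((4 * (N ^ n * (N ^ n * (2 * n + 3) ^ n)) : ℕ) : ℝ) := by
                rw [hK]; push_cast; ring
              rw [hKn, ENNReal.ofReal_natCast]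
              push_cast
              rfl
            rw [this]
            ring
        _ = ENNReal.ofReal (β / 2) * ν D := by
            rw [hc, ← ENNReal.ofReal_mul (by positivity), div_mul_cancel₀ _ hK0.ne'])
  refine ⟨D', hD'm, fun h => hD'0 ?_, lt_of_le_of_lt hdim ?_⟩
  · exact le_antisymm ((Measure.restrict_apply_le _ _).trans h.le) (zero_le)
  · rw [← ENNReal.ofReal_coe_nnreal, ENNReal.ofReal_lt_ofReal_iff (by linarith), ht]
    linarith

theorem stmt10 (n m : ℕ) (hm : m < n) (s α : ℝ) (hs : (m : ℝ) < s)
    (hα0 : 0 < α) (hα1 : α ≤ 1) :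
    ∃ c : ℝ, 0 < c ∧
      ∀ (μ : Measure (EuclideanSpace ℝ (Fin n))) [IsFiniteMeasure μ],
        ENNReal.ofReal s ≤ measDimH μ →
        ∀ᵐ x ∂μ, ENNReal.ofReal c <
          limsup (fun r : ℝ =>
            ⨅ (θ : sphere (0 : EuclideanSpace ℝ (Fin n)) 1)
              (V : Submodule ℝ (EuclideanSpace ℝ (Fin n)))
              (_ : Module.finrank ℝ V = n - m),
              μ ((closedBall x r ∩ coneX x V α) \ almostHalfSpace x θ α)
                / μ (closedBall x r))
            (nhdsWithin 0 (Set.Ioi 0)) := by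
  obtain ⟨c, hc, hcore⟩ := core n m hm s α hs hα0 hα1
  refine ⟨c / 2, half_pos hc, ?_⟩
  intro μ _ hdim
  have hcc : ENNReal.ofReal (c / 2) < ENNReal.ofReal c :=
    (ENNReal.ofReal_lt_ofReal_iff hc).2 (half_lt_self hc)
  let A : ℕ → Set (EuclideanSpace ℝ (Fin n)) := fun j =>
    {x | ∀ r, 0 < r → r < 1 / ((j : ℝ) + 1) → ∃ (θ : EuclideanSpace ℝ (Fin n))
      (V : Submodule ℝ (EuclideanSpace ℝ (Fin n))), ‖θ‖ = 1 ∧ Module.finrank ℝ V = n - m ∧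
      μ ((closedBall x r ∩ coneX x V α) \ almostHalfSpace x θ α) ≤
        ENNReal.ofReal c * μ (closedBall x r)}
  have hA0 : ∀ j, μ (A j) = 0 := by
    intro j
    by_contra hne
    obtain ⟨U, hAU, hUo, hUμ⟩ := Set.exists_isOpen_le_add (A j) μ hne
    let Dl : ℕ → Set (EuclideanSpace ℝ (Fin n)) := fun l =>
      {x | x ∈ A j ∧ ‖x‖ ≤ l ∧ closedBall x (1 / ((l : ℝ) + 1)) ⊆ U}
    have hmono : Monotone Dl := by
      rintro a b hab x ⟨h1, h2, h3⟩
      have hab' : (a : ℝ) ≤ b := by exact_mod_cast hab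
      refine ⟨h1, h2.trans hab', (closedBall_subset_closedBall ?_).trans h3⟩
      gcongr
    have hunion : ⋃ l, Dl l = A j := by
      ext x
      simp only [mem_iUnion]
      constructor
      · rintro ⟨l, h⟩; exact h.1
      · intro hx
        obtain ⟨ε, hε, hball⟩ := Metric.nhds_basis_closedBall.mem_iff.1
          (hUo.mem_nhds (hAU hx))
        obtain ⟨l1, hl1⟩ := exists_nat_ge ‖x‖
        obtain ⟨l2, hl2⟩ := exists_nat_one_div_lt hε
        refine ⟨max l1 l2, hx, hl1.trans (by exact_mod_cast le_max_left _ _),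
          (closedBall_subset_closedBall ?_).trans hball⟩
        refine le_trans ?_ hl2.le
        have : (l2 : ℝ) ≤ (max l1 l2 : ℕ) := by exact_mod_cast le_max_right _ _
        gcongr
    have hsup : μ (A j) = ⨆ l, μ (Dl l) := by rw [← hunion, hmono.measure_iUnion]
    have hhalf : μ (A j) / 2 < ⨆ l, μ (Dl l) := by
      rw [← hsup]
      exact ENNReal.half_lt_self hne (measure_ne_top _ _)
    obtain ⟨l, hl⟩ := lt_iSup_iff.1 hhalf
    have hDU : Dl l ⊆ U := fun x hx => hAU hx.1
    have hν : ∀ S, S ⊆ U → (μ.restrict U) S = μ S := by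
      intro S hS
      rw [Measure.restrict_apply' hUo.measurableSet, inter_eq_self_of_subset_left hS]
    obtain ⟨D', hD'm, hD'0, hD'dim⟩ := hcore (μ.restrict U) (Dl l) l
      (min (1 / ((j : ℝ) + 1)) (1 / ((l : ℝ) + 1))) (by positivity)
      (by rw [hν _ hDU]; exact (zero_le.trans_lt hl).ne')
      (by
        rw [hν _ hDU, Measure.restrict_apply_univ]
        refine hUμ.trans ?_
        have h1 : μ (A j) ≤ 2 * μ (Dl l) := by
          rw [mul_comm, ← ENNReal.div_le_iff_le_mul (by simp) (by simp)]
          exact hl.le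
        calc μ (A j) + μ (A j) ≤ 2 * μ (Dl l) + 2 * μ (Dl l) := add_le_add h1 h1
          _ = 4 * μ (Dl l) := by ring)
      (fun x hx => by rw [mem_closedBall_zero_iff]; exact hx.2.1)
      (fun x hx r hr0 hr => by
        obtain ⟨θ, V, h1, h2, h3⟩ := hx.1 r hr0 (hr.trans_le (min_le_left _ _))
        have hb : closedBall x r ⊆ U := (closedBall_subset_closedBall
          (hr.le.trans (min_le_right _ _))).trans hx.2.2
        refine ⟨θ, V, h1, h2, ?_⟩
        rw [hν _ hb, hν _ (fun y hy => hb hy.1.1)]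
        exact h3)
    have hpos : 0 < μ D' :=
      (pos_iff_ne_zero.2 hD'0).trans_le (Measure.restrict_apply_le _ _)
    have : measDimH μ ≤ dimH D' := iInf_le_of_le D' (iInf_le_of_le hD'm (iInf_le _ hpos))
    exact absurd (hdim.trans this) (not_le.2 hD'dim)
  rw [ae_iff]
  refine measure_mono_null ?_ (measure_iUnion_null hA0)
  intro x hx
  have hx' := not_lt.1 hx
  have hev := eventually_lt_of_limsup_lt (lt_of_le_of_lt hx' hcc)
  obtain ⟨ε, hε, hsub⟩ := (mem_nhdsGT_iff_exists_Ioo_subset).1 hev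
  obtain ⟨j, hj⟩ := exists_nat_one_div_lt (show (0 : ℝ) < ε from hε)
  refine mem_iUnion.2 ⟨j, ?_⟩
  intro r hr0 hr
  have h1 := hsub ⟨hr0, hr.trans hj⟩
  simp only [Set.mem_ofPred_eq, iInf_lt_iff] at h1
  obtain ⟨θ, V, hV, h2⟩ := h1
  refine ⟨θ, V, by simp, hV, ?_⟩
  by_cases hb : μ (closedBall x r) = 0
  · rw [measure_mono_null (fun y hy => hy.1.1) hb]
    exact zero_le
  · exact (ENNReal.div_le_iff_le_mul (Or.inl hb) (Or.inl (measure_ne_top _ _))).1 h2.le
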